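/- Let R be a semiartinian von Neumann regular ring with primitive factors artinian, with right socle sequence (S_α | α ≤ σ+1). If σ is a countable ordinal and each proper layer L_α (0 < α < σ) is countably generated, then R is left and right hereditary. -/

import Mathlib

universe u

open Submodule Function

/-- The socle of a module: the supremum of all simple submodules. -/
def moduleSocle (R : Type*) (M : Type*) [Ring R] [AddCommGroup M] [Module R M] :
    Submodule R M :=
  sSup {W : Submodule R M | IsSimpleModule R ↥W}

/-- A ring is right semiartinian if every nonzero quotient of the right module `R_R`
has a nonzero socle. -/
def IsRightSemiartinian (R : Type u) [Ring R] : Prop :=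
  ∀ I : Submodule Rᵐᵒᵖ R, I ≠ ⊤ → moduleSocle Rᵐᵒᵖ (R ⧸ I) ≠ ⊥

/-- The right socle sequence of a ring: `S_0 = 0`, `S_{α+1}/S_α = Soc(R/S_α)`,
and unions at limits. -/
noncomputable def socleSeq (R : Type u) [Ring R] : Ordinal.{u} → Submodule Rᵐᵒᵖ R :=
  fun o => Ordinal.limitRecOn o ⊥
    (fun _ S => Submodule.comap S.mkQ (moduleSocle Rᵐᵒᵖ (R ⧸ S)))
    (fun o _ ih => ⨆ (β : Ordinal.{u}) (h : β < o), ih β h)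

/-- `S_α`, viewed as a submodule of `S_{α+1}`; the kernel of the `α`-th layer
epimorphism `π_α : S_{α+1} → S_{α+1}/S_α`. -/
noncomputable def layerKer (R : Type u) [Ring R] (α : Ordinal.{u}) :
    Submodule Rᵐᵒᵖ ↥(socleSeq R (α + 1)) :=
  (socleSeq R α).comap (socleSeq R (α + 1)).subtype

/-- The `α`-th layer `L_α = S_{α+1}/S_α` of a ring. -/
noncomputable abbrev Layer (R : Type u) [Ring R] (α : Ordinal.{u}) :=
  ↥(socleSeq R (α + 1)) ⧸ layerKer R α

/-- A module `M` is weakly `R`-projective if for each `0 < α ≤ σ`, every homomorphism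
`f : M → L_α` with finitely generated image factors through the `α`-th layer
epimorphism `π_α : S_{α+1} → L_α`. -/
def WeaklyRProjective (R : Type u) [Ring R] (σ : Ordinal.{u})
    (M : Type u) [AddCommGroup M] [Module Rᵐᵒᵖ M] : Prop :=
  ∀ α : Ordinal.{u}, 0 < α → α ≤ σ →
    ∀ f : M →ₗ[Rᵐᵒᵖ] Layer R α, (LinearMap.range f).FG →
      ∃ g : M →ₗ[Rᵐᵒᵖ] ↥(socleSeq R (α + 1)), (layerKer R α).mkQ ∘ₗ g = f

/-- A ring is von Neumann regular if each `r` admits `s` with `r * s * r = r`. -/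
def IsVNRegular (R : Type u) [Ring R] : Prop :=
  ∀ r : R, ∃ s : R, r * s * r = r

/-- The annihilator of a right `R`-module, as a submodule of the right module `R_R`. -/
def rightAnnihilator (R : Type u) [Ring R] (M : Type u) [AddCommGroup M]
    [Module Rᵐᵒᵖ M] : Submodule Rᵐᵒᵖ R where
  carrier := {r : R | ∀ m : M, MulOpposite.op r • m = 0}
  add_mem' := by
    intro a b ha hb m
    rw [MulOpposite.op_add, add_smul, ha m, hb m, add_zero]
  zero_mem' := by
    intro m
    rw [MulOpposite.op_zero, zero_smul]
  smul_mem' := by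
    intro c r hr m
    have h : MulOpposite.op (c • r) = c * MulOpposite.op r := by
      rw [MulOpposite.smul_eq_mul_unop, MulOpposite.op_mul, MulOpposite.op_unop]
    rw [h, mul_smul, hr m, smul_zero]

/-- A ring has (right) primitive factors artinian if, for each right primitive
(two-sided) ideal `P`, i.e. the annihilator of a simple right module, the factor
`R/P` is (right) artinian. -/
def HasPFA (R : Type u) [Ring R] : Prop :=
  ∀ (M : Type u) [AddCommGroup M] [Module Rᵐᵒᵖ M], IsSimpleModule Rᵐᵒᵖ M →
    IsArtinian Rᵐᵒᵖ (R ⧸ rightAnnihilator R M)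

section Generic

variable {A M : Type u} [Ring A] [AddCommGroup M] [Module A M]

/-- Regular module in the sense of Zelmanowitz. -/
def ZReg (A M : Type u) [Ring A] [AddCommGroup M] [Module A M] : Prop :=
  ∀ x : M, ∃ φ : M →ₗ[A] A, φ x • x = x

/-- `x` generates a zero or simple submodule modulo `N`. -/
def NS (N : Submodule A M) (x : M) : Prop :=
  ∀ a : A, a • x ∉ N → ∃ b : A, x - b • (a • x) ∈ N

lemma ZReg.submodule (h : ZReg A M) (T : Submodule A M) : ZReg A T := by
  intro x
  obtain ⟨φ, hφ⟩ := h x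
  exact ⟨φ ∘ₗ T.subtype, Subtype.ext (by simpa using hφ)⟩

/-- The recursive sequence of projections. -/
noncomputable def projSeq (φ : M → (M →ₗ[A] A)) (c : ℕ → M) : ℕ → (M →ₗ[A] M)
  | 0 => 0
  | n + 1 =>
    let p := projSeq φ c n
    p + ((φ (c n - p (c n))) ∘ₗ (LinearMap.id - p)).smulRight (c n - p (c n))

lemma projSeq_succ (φ : M → (M →ₗ[A] A)) (c : ℕ → M) (n : ℕ) (m : M) :
    projSeq φ c (n + 1) m = projSeq φ c n m +
      (φ (c n - projSeq φ c n (c n)) (m - projSeq φ c n m)) • (c n - projSeq φ c n (c n)) := by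
  simp [projSeq]

lemma projSeq_spec (φ : M → (M →ₗ[A] A)) (hφ : ∀ x, φ x x • x = x) (c : ℕ → M) (n : ℕ) :
    (∀ m, projSeq φ c n m ∈ span A (c '' Set.Iio n)) ∧
    (∀ m ∈ span A (c '' Set.Iio n), projSeq φ c n m = m) := by
  induction n with
  | zero => simp [projSeq]
  | succ n ih =>
    obtain ⟨h1, h2⟩ := ih
    have hle : span A (c '' Set.Iio n) ≤ span A (c '' Set.Iio (n+1)) :=
      span_mono (Set.image_mono (Set.Iio_subset_Iio (Nat.le_succ n)))
    have hc : c n ∈ span A (c '' Set.Iio (n+1)) := subset_span ⟨n, by simp, rfl⟩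
    constructor
    · intro m
      rw [projSeq_succ]
      exact add_mem (hle (h1 m)) (smul_mem _ _ (sub_mem hc (hle (h1 _))))
    · have : span A (c '' Set.Iio (n+1)) ≤
          LinearMap.ker (LinearMap.id - projSeq φ c (n+1)) := by
        rw [span_le]
        rintro _ ⟨i, hi, rfl⟩
        have hi' : i < n + 1 := hi
        simp only [SetLike.mem_coe, LinearMap.mem_ker, LinearMap.sub_apply, LinearMap.id_apply,
          projSeq_succ, sub_eq_zero]
        rcases Nat.lt_succ_iff_lt_or_eq.mp hi' with h | rfl
        · rw [h2 (c i) (subset_span ⟨i, h, rfl⟩)]; simp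
        · rw [hφ]; simp
      intro m hm
      have := this hm
      simp only [LinearMap.mem_ker, LinearMap.sub_apply, LinearMap.id_apply, sub_eq_zero] at this
      exact this.symm

lemma ZReg.projective_of_seq (h : ZReg A M) (c : ℕ → M) (hc : span A (Set.range c) = ⊤) :
    Module.Projective A M := by
  choose φ hφ using h
  set p := projSeq φ c with hp
  let x : ℕ → M := fun n => c n - p n (c n)
  let ψ : ℕ → (M →ₗ[A] A) := fun n => (φ (x n)) ∘ₗ (LinearMap.id - p n)
  have hsum : ∀ n m, p n m = ∑ i ∈ Finset.range n, ψ i m • x i := by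
    intro n m
    induction n with
    | zero => simp [hp, projSeq]
    | succ n ih =>
      rw [Finset.sum_range_succ, ← ih, hp, projSeq_succ]
      rfl
  have hmem : ∀ m : M, ∃ n, m ∈ span A (c '' Set.Iio n) := by
    have mono : ∀ i j, i ≤ j → span A (c '' Set.Iio i) ≤ span A (c '' Set.Iio j) :=
      fun i j hij => span_mono (Set.image_mono (Set.Iio_subset_Iio hij))
    intro m
    have hm : m ∈ span A (Set.range c) := hc ▸ mem_top
    induction hm using span_induction with
    | mem x hx =>
      obtain ⟨i, rfl⟩ := hx
      exact ⟨i+1, subset_span ⟨i, by simp, rfl⟩⟩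
    | zero => exact ⟨0, zero_mem _⟩
    | add x y _ _ hx hy =>
      obtain ⟨i, hi⟩ := hx
      obtain ⟨j, hj⟩ := hy
      exact ⟨max i j, add_mem (mono _ _ (le_max_left _ _) hi) (mono _ _ (le_max_right _ _) hj)⟩
    | smul a x _ hx =>
      obtain ⟨n, hn⟩ := hx
      exact ⟨n, smul_mem _ _ hn⟩
  have hzero : ∀ n m, m ∈ span A (c '' Set.Iio n) → ∀ i, n ≤ i → ψ i m = 0 := by
    intro n m hm i hi
    have : p i m = m := (projSeq_spec φ hφ c i).2 m
      (span_mono (Set.image_mono (Set.Iio_subset_Iio hi)) hm)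
    simp [ψ, this]
  have hfin : ∀ m, (Function.support fun i => ψ i m).Finite := by
    intro m
    obtain ⟨n, hn⟩ := hmem m
    refine (Set.finite_Iio n).subset fun i hi => ?_
    by_contra hni
    exact hi (hzero n m hn i (not_lt.mp hni))
  let s : M →ₗ[A] (ℕ →₀ A) :=
    { toFun := fun m => Finsupp.ofSupportFinite (fun i => ψ i m) (hfin m)
      map_add' := fun a b => Finsupp.ext fun i => map_add (ψ i) a b
      map_smul' := fun a b => Finsupp.ext fun i => map_smul (ψ i) a b }
  have hs : ∀ m i, s m i = ψ i m := fun m i => rfl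
  refine Module.Projective.of_split s (Finsupp.linearCombination A x) ?_
  ext m
  obtain ⟨n, hn⟩ := hmem m
  have h1 : p n m = m := (projSeq_spec φ hφ c n).2 m hn
  rw [LinearMap.comp_apply, LinearMap.id_apply, Finsupp.linearCombination_apply]
  rw [Finsupp.sum_of_support_subset (s := Finset.range n)]
  · simp only [hs]
    rw [← hsum, h1]
  · intro i hi
    rw [Finsupp.mem_support_iff, hs] at hi
    rw [Finset.mem_range]
    by_contra hni
    exact hi (hzero n m hn i (not_lt.mp hni))
  · simp

lemma ZReg.projective_of_countable (h : ZReg A M) (C : Set M) (hC : C.Countable)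
    (hs : span A C = ⊤) : Module.Projective A M := by
  rcases C.eq_empty_or_nonempty with rfl | hne
  · refine h.projective_of_seq (fun _ => 0) ?_
    rw [eq_top_iff, ← hs]; simp
  · obtain ⟨c, rfl⟩ := hC.exists_eq_range hne
    exact h.projective_of_seq c hs

lemma ZReg.projective_span (h : ZReg A M) (C : Set M) (hC : C.Countable) :
    Module.Projective A (span A C) := by
  refine (h.submodule (span A C)).projective_of_countable ((↑) ⁻¹' C)
    (hC.preimage Subtype.val_injective) ?_
  exact span_span_coe_preimage

lemma ZReg.projective_of_semisimple (h : ZReg A M) [IsSemisimpleModule A M] :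
    Module.Projective A M := by
  obtain ⟨s, e, -, hs⟩ := IsSemisimpleModule.exists_linearEquiv_dfinsupp A M
  have : ∀ m : s, Module.Projective A m.1 := by
    intro m
    have := hs m
    obtain ⟨x, hx⟩ := (inferInstance : (⊤ : Submodule A m.1).IsPrincipal)
    exact (h.submodule m.1).projective_of_countable {x} (Set.countable_singleton x) hx.symm
  exact Module.Projective.of_equiv e.symm

lemma projective_sup (T J : Submodule A M) (hd : Disjoint T J) [Module.Projective A T]
    [Module.Projective A J] : Module.Projective A ↥(T ⊔ J) := by
  have hinj : Injective (T.subtype.coprod J.subtype) := by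
    rw [← LinearMap.ker_eq_bot, LinearMap.ker_coprod_of_disjoint_range]
    · simp
    · simpa using hd
  have hr : LinearMap.range (T.subtype.coprod J.subtype) = T ⊔ J := by
    rw [LinearMap.range_coprod]; simp
  exact Module.Projective.of_equiv ((LinearEquiv.ofInjective _ hinj).trans (LinearEquiv.ofEq _ _ hr))

lemma NS.isSimple {N : Submodule A M} {x : M} (h : NS N x) (hx : x ∉ N) :
    IsSimpleModule A (span A {N.mkQ x}) := by
  rw [isSimpleModule_iff_isAtom]
  constructor
  · simpa [Submodule.span_singleton_eq_bot] using hx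
  · intro V hV
    by_contra hne
    obtain ⟨v, hv, hv0⟩ := (Submodule.ne_bot_iff V).mp hne
    obtain ⟨a, rfl⟩ := mem_span_singleton.mp (hV.le hv)
    have hax : a • x ∉ N := by
      intro hmem
      apply hv0
      rw [← map_smul, ← LinearMap.mem_ker, ker_mkQ]
      exact hmem
    obtain ⟨b, hb⟩ := h a hax
    apply hV.not_ge
    rw [span_le, Set.singleton_subset_iff]
    have : N.mkQ x = b • (a • N.mkQ x) := by
      rw [← map_smul, ← map_smul, ← sub_eq_zero, ← map_sub,
        ← LinearMap.mem_ker, ker_mkQ]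
      exact hb
    rw [this]
    exact smul_mem _ _ hv

lemma NS.of_isSimple {N : Submodule A M} {W : Submodule A (M ⧸ N)} (hW : IsSimpleModule A W)
    {x : M} (hx : N.mkQ x ∈ W) : NS N x := by
  rw [isSimpleModule_iff_isAtom] at hW
  intro a ha
  have hle : span A {N.mkQ (a • x)} ≤ W := by
    rw [span_le, Set.singleton_subset_iff, map_smul]
    exact smul_mem _ _ hx
  have hne : span A {N.mkQ (a • x)} ≠ ⊥ := by
    rw [Ne, Submodule.span_singleton_eq_bot, ← LinearMap.mem_ker, ker_mkQ]
    exact ha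
  have heq := (hW.le_iff.mp hle).resolve_left hne
  rw [← heq, mem_span_singleton] at hx
  obtain ⟨b, hb⟩ := hx
  refine ⟨b, ?_⟩
  rw [← Submodule.ker_mkQ N, LinearMap.mem_ker, map_sub, map_smul, hb, sub_self]

lemma comap_socle_eq (N : Submodule A M) :
    comap N.mkQ (moduleSocle A (M ⧸ N)) = span A {x | NS N x} := by
  apply le_antisymm
  · have h1 : moduleSocle A (M ⧸ N) ≤ map N.mkQ (span A {x | NS N x}) := by
      apply sSup_le
      intro W hW w hw
      obtain ⟨x, rfl⟩ := N.mkQ_surjective w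
      exact ⟨x, subset_span (NS.of_isSimple hW hw), rfl⟩
    refine (comap_mono h1).trans ?_
    rw [comap_map_mkQ, sup_le_iff]
    refine ⟨fun x hx => subset_span ?_, le_rfl⟩
    intro a ha
    exact absurd (smul_mem _ _ hx) ha
  · rw [span_le]
    intro x hx
    by_cases hxN : x ∈ N
    · have : N.mkQ x = 0 := by simpa using hxN
      simp only [SetLike.mem_coe, mem_comap, this, zero_mem]
    · have : span A {N.mkQ x} ≤ moduleSocle A (M ⧸ N) := le_sSup (NS.isSimple hx hxN)
      exact this (mem_span_singleton_self _)

lemma socle_semisimple : IsSemisimpleModule A (moduleSocle A M) := by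
  unfold moduleSocle
  rw [sSup_eq_iSup]
  refine isSemisimpleModule_biSup_of_isSemisimpleModule_submodule fun W hW => ?_
  have : IsSimpleModule A W := hW
  infer_instance

lemma semisimple_le {U V : Submodule A M} (h : U ≤ V) [IsSemisimpleModule A V] :
    IsSemisimpleModule A U :=
  IsSemisimpleModule.of_injective (inclusion h) (inclusion_injective h)

/-- Submodules of countably generated semisimple sections are countably generated. -/
lemma countable_section (N N' I : Submodule A M) (hss : N' ≤ span A {x | NS N x})
    (D : Set M) (hD : D.Countable) (hDN : N' ≤ span A D ⊔ N) (hDN' : D ⊆ N') :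
    ∃ C : Set M, C.Countable ∧ C ⊆ I ∧ I ⊓ N' ≤ span A C ⊔ N := by
  let W := map N.mkQ N'
  have hW : W ≤ moduleSocle A (M ⧸ N) := by
    rw [map_le_iff_le_comap, comap_socle_eq]; exact hss
  have := socle_semisimple (A := A) (M := M ⧸ N)
  have hWs : IsSemisimpleModule A W := semisimple_le hW
  let V := map N.mkQ (I ⊓ N')
  have hVW : V ≤ W := map_mono inf_le_right
  obtain ⟨p, hp⟩ := IsSemisimpleModule.extension_property (inclusion hVW)
    (inclusion_injective hVW) (LinearMap.id : V →ₗ[A] V)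
  have hlift : ∀ d : D, ∃ c ∈ I ⊓ N',
      N.mkQ c = (p ⟨N.mkQ d, mem_map_of_mem (hDN' d.2)⟩ : M ⧸ N) := fun d => (p _).2
  choose c hcI hc using hlift
  have : Countable D := hD.to_subtype
  refine ⟨Set.range c, Set.countable_range c, ?_, ?_⟩
  · rintro _ ⟨d, rfl⟩
    exact (hcI d).1
  · let q : W →ₗ[A] M ⧸ N := V.subtype ∘ₗ p
    let U := map W.subtype (comap q (map N.mkQ (span A (Set.range c))))
    have hU : N' ≤ comap N.mkQ U := by
      refine hDN.trans (sup_le (span_le.mpr ?_) ?_)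
      · intro d hd
        refine ⟨⟨N.mkQ d, mem_map_of_mem (hDN' hd)⟩, ?_, rfl⟩
        exact ⟨c ⟨d, hd⟩, subset_span ⟨_, rfl⟩, hc ⟨d, hd⟩⟩
      · intro n hn
        have : N.mkQ n = 0 := by rw [← LinearMap.mem_ker, ker_mkQ]; exact hn
        rw [mem_comap, this]
        exact zero_mem _
    intro x hx
    obtain ⟨w, hw, hwx⟩ := hU hx.2
    have hxV : N.mkQ x ∈ V := mem_map_of_mem hx
    have hwe : w = inclusion hVW ⟨N.mkQ x, hxV⟩ := Subtype.ext hwx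
    have hq : q w = N.mkQ x := by
      have := LinearMap.congr_fun hp ⟨N.mkQ x, hxV⟩
      rw [LinearMap.comp_apply, ← hwe] at this
      simp [q, this]
    have h2 : N.mkQ x ∈ map N.mkQ (span A (Set.range c)) := hq ▸ hw
    have h3 : x ∈ comap N.mkQ (map N.mkQ (span A (Set.range c))) := h2
    rw [comap_map_mkQ, sup_comm] at h3
    exact h3

theorem hereditary_generic (hz : ZReg A M) (σ : Ordinal.{u}) (N : Ordinal.{u} → Submodule A M)
    (h0 : N 0 = ⊥)
    (hlim : ∀ o : Ordinal.{u}, Order.IsSuccLimit o → ∀ x ∈ N o, ∃ β < o, x ∈ N β)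
    (htop : N (σ + 1) = ⊤)
    (hss : ∀ α, N (α + 1) ≤ span A {x | NS (N α) x})
    (hσc : σ.card ≤ Cardinal.aleph0)
    (hc : ∀ α, 0 < α → α ≤ σ → ∃ D : Set M, D.Countable ∧ D ⊆ N (α + 1) ∧
      N (α + 1) ≤ span A D ⊔ N α) (I : Submodule A M) : Module.Projective A I := by
  have hC : ∀ α : Ordinal.{u}, ∃ C : Set M, C.Countable ∧ C ⊆ I ∧
      (0 < α → α ≤ σ → I ⊓ N (α + 1) ≤ span A C ⊔ N α) := by
    intro α
    by_cases h : 0 < α ∧ α ≤ σ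
    · obtain ⟨D, h1, h2, h3⟩ := hc α h.1 h.2
      obtain ⟨C, h4, h5, h6⟩ := countable_section (N α) (N (α + 1)) I (hss α) D h1 h3 h2
      exact ⟨C, h4, h5, fun _ _ => h6⟩
    · exact ⟨∅, Set.countable_empty, Set.empty_subset _, fun h1 h2 => absurd ⟨h1, h2⟩ h⟩
  choose C hCc hCI hCs using hC
  let E : Set M := ⋃ α ∈ Set.Iic σ, C α
  have hcount : (Set.Iic σ).Countable := by
    have : (Set.Iio σ).Countable := by
      rw [← Cardinal.le_aleph0_iff_set_countable, Cardinal.mk_Iio_ordinal,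
        Cardinal.lift_le_aleph0]
      exact hσc
    rw [← Set.Iio_insert]
    exact this.insert σ
  have hEc : E.Countable := hcount.biUnion fun α _ => hCc α
  have hEI : span A E ≤ I := by
    rw [span_le]
    exact Set.iUnion₂_subset fun α _ => hCI α
  have key : ∀ α : Ordinal.{u}, α ≤ σ + 1 → I ⊓ N α ≤ (I ⊓ N 1) ⊔ span A E := by
    intro α
    induction α using Ordinal.limitRecOn with
    | zero => intro _; rw [h0]; simp
    | add_one α ih =>
      intro hα
      have hασ : α ≤ σ := by simpa using hα
      rcases eq_or_ne α 0 with rfl | hne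
      · rw [zero_add]; exact le_sup_left
      · have hpos : 0 < α := pos_iff_ne_zero.mpr hne
        intro x hx
        obtain ⟨y, hy, n, hn, rfl⟩ := mem_sup.mp (hCs α hpos hασ hx)
        have hyE : y ∈ span A E :=
          span_mono (Set.subset_biUnion_of_mem (u := C) (show α ∈ Set.Iic σ from hασ)) hy
        have hnI : n ∈ I := by
          have := sub_mem hx.1 (hEI hyE)
          simpa using this
        exact add_mem (mem_sup_right hyE) (ih (hασ.trans (by simp)) ⟨hnI, hn⟩)
    | limit o ho ih =>
      intro hoσ x hx
      obtain ⟨β, hβ, hxβ⟩ := hlim o ho x hx.2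
      exact ih β hβ (hβ.le.trans hoσ) ⟨hx.1, hxβ⟩
  have hI : I = (I ⊓ N 1) ⊔ span A E := by
    apply le_antisymm
    · simpa [htop] using key (σ + 1) le_rfl
    · exact sup_le inf_le_left hEI
  have hS : IsSemisimpleModule A ↥(I ⊓ N 1) := by
    have := socle_semisimple (A := A) (M := M ⧸ N 0)
    have hmem : ∀ x : ↥(I ⊓ N 1), ((N 0).mkQ ∘ₗ (I ⊓ N 1).subtype) x ∈
        moduleSocle A (M ⧸ N 0) := by
      intro x
      have h1 : (x : M) ∈ span A {x | NS (N 0) x} := hss 0 (by rw [zero_add]; exact x.2.2)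
      rwa [← comap_socle_eq] at h1
    refine IsSemisimpleModule.of_injective
      (((N 0).mkQ ∘ₗ (I ⊓ N 1).subtype).codRestrict _ hmem) ?_
    rw [LinearMap.injective_codRestrict_iff, ← LinearMap.ker_eq_bot, LinearMap.ker_comp, ker_mkQ,
      h0]
    simp
  obtain ⟨T, hT⟩ := exists_isCompl (comap (I ⊓ N 1).subtype (span A E))
  let T' := map (I ⊓ N 1).subtype T
  have hT'le : T' ≤ I ⊓ N 1 := map_subtype_le _ _
  have hdisj : Disjoint T' (span A E) := by
    rw [disjoint_def]
    rintro _ ⟨t, ht, rfl⟩ hE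
    have := (disjoint_def.mp hT.disjoint) t hE ht
    simp [this]
  have hsup : I = T' ⊔ span A E := by
    apply le_antisymm
    · refine hI.le.trans (sup_le ?_ le_sup_right)
      intro x hx
      have : (⟨x, hx⟩ : ↥(I ⊓ N 1)) ∈ comap (I ⊓ N 1).subtype (span A E) ⊔ T := by
        rw [hT.sup_eq_top]; exact mem_top
      obtain ⟨a, ha, b, hb, hab⟩ := mem_sup.mp this
      have hx' : x = (a : M) + b := (congrArg Subtype.val hab).symm
      rw [hx']
      exact add_mem (mem_sup_right ha) (mem_sup_left (mem_map_of_mem hb))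
    · exact sup_le (hT'le.trans inf_le_left) hEI
  have : IsSemisimpleModule A T' := semisimple_le hT'le
  have : Module.Projective A T' := (hz.submodule T').projective_of_semisimple
  have : Module.Projective A (span A E) := hz.projective_span E hEc
  rw [hsup]
  exact projective_sup _ _ hdisj

end Generic

section RingPart

variable {R : Type u} [Ring R]

lemma zreg_left (h : IsVNRegular R) : ZReg R R := by
  intro x
  obtain ⟨s, hs⟩ := h x
  exact ⟨LinearMap.toSpanSingleton R R s, by simpa using hs⟩

lemma zreg_right (h : IsVNRegular R) : ZReg Rᵐᵒᵖ R := by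
  intro x
  obtain ⟨s, hs⟩ := h x
  refine ⟨{ toFun := fun m => MulOpposite.op (s * m)
            map_add' := fun a b => by simp [mul_add]
            map_smul' := fun a b => by
              apply MulOpposite.unop_injective
              simp [MulOpposite.smul_eq_mul_unop, mul_assoc] }, ?_⟩
  simp only [LinearMap.coe_mk, AddHom.coe_mk, MulOpposite.smul_eq_mul_unop, MulOpposite.unop_op]
  rw [← mul_assoc, hs]

lemma socleSeq_zero : socleSeq R 0 = ⊥ := by
  simp [socleSeq]

lemma socleSeq_succ' (α : Ordinal.{u}) : socleSeq R (α + 1) =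
    comap (socleSeq R α).mkQ (moduleSocle Rᵐᵒᵖ (R ⧸ socleSeq R α)) := by
  unfold socleSeq
  exact Ordinal.limitRecOn_add_one ..

lemma socleSeq_succ (α : Ordinal.{u}) :
    socleSeq R (α + 1) = span Rᵐᵒᵖ {x | NS (socleSeq R α) x} := by
  rw [socleSeq_succ', comap_socle_eq]

lemma socleSeq_limit {o : Ordinal.{u}} (ho : Order.IsSuccLimit o) :
    socleSeq R o = ⨆ (β : Ordinal.{u}) (_ : β < o), socleSeq R β := by
  unfold socleSeq
  rw [Ordinal.limitRecOn_limit _ _ _ _ ho]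

lemma socleSeq_le_succ (α : Ordinal.{u}) : socleSeq R α ≤ socleSeq R (α + 1) := by
  rw [socleSeq_succ]
  exact fun x hx => subset_span fun a ha => absurd (smul_mem _ _ hx) ha

lemma socleSeq_mono {α β : Ordinal.{u}} (h : α ≤ β) : socleSeq R α ≤ socleSeq R β := by
  induction β using Ordinal.limitRecOn with
  | zero => rw [nonpos_iff_eq_zero.mp h]
  | add_one β ih =>
    rcases h.eq_or_lt with rfl | h
    · exact le_rfl
    · exact (ih (Order.lt_add_one_iff.mp h)).trans (socleSeq_le_succ β)
  | limit o ho ih =>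
    rcases h.eq_or_lt with rfl | h
    · exact le_rfl
    · rw [socleSeq_limit ho]
      exact le_iSup₂_of_le α h le_rfl

lemma mem_socleSeq_limit {o : Ordinal.{u}} (ho : Order.IsSuccLimit o) {x : R}
    (hx : x ∈ socleSeq R o) : ∃ β < o, x ∈ socleSeq R β := by
  rw [socleSeq_limit ho, iSup_subtype'] at hx
  have : Nonempty {β : Ordinal.{u} // β < o} := ⟨⟨0, ho.bot_lt⟩⟩
  rw [mem_iSup_of_directed] at hx
  · obtain ⟨β, hβ⟩ := hx
    exact ⟨β.1, β.2, hβ⟩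
  · intro a b
    rcases le_total a.1 b.1 with h | h
    · exact ⟨b, socleSeq_mono h, le_rfl⟩
    · exact ⟨a, le_rfl, socleSeq_mono h⟩

lemma mul_mem_right' (S : Submodule Rᵐᵒᵖ R) {x : R} (hx : x ∈ S) (t : R) : x * t ∈ S := by
  simpa using S.smul_mem (MulOpposite.op t) hx

lemma NS_right_iff {S : Submodule Rᵐᵒᵖ R} {x : R} :
    NS S x ↔ ∀ t : R, x * t ∉ S → ∃ u : R, x - x * t * u ∈ S := by
  constructor
  · intro h t ht
    obtain ⟨b, hb⟩ := h (MulOpposite.op t) (by simpa using ht)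
    exact ⟨b.unop, by simpa [MulOpposite.smul_eq_mul_unop] using hb⟩
  · intro h a ha
    obtain ⟨u, hu⟩ := h a.unop (by simpa [MulOpposite.smul_eq_mul_unop] using ha)
    exact ⟨MulOpposite.op u, by simpa [MulOpposite.smul_eq_mul_unop] using hu⟩

lemma NS.mul_right {S : Submodule Rᵐᵒᵖ R} {x : R} (h : NS S x) (v : R) : NS S (x * v) := by
  rw [NS_right_iff] at h ⊢
  intro t ht
  obtain ⟨u, hu⟩ := h (v * t) (by rwa [← mul_assoc])
  refine ⟨u * v, ?_⟩
  have := mul_mem_right' S hu v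
  rw [sub_mul] at this
  simpa [mul_assoc] using this

lemma NS.mul_left {S : Submodule Rᵐᵒᵖ R} (hS : ∀ r : R, ∀ x ∈ S, r * x ∈ S) {x : R}
    (h : NS S x) (r : R) : NS S (r * x) := by
  rw [NS_right_iff] at h ⊢
  intro t ht
  obtain ⟨u, hu⟩ := h t (fun hx => ht (by rw [mul_assoc]; exact hS _ _ hx))
  refine ⟨u, ?_⟩
  have := hS r _ hu
  rw [mul_sub] at this
  simpa [mul_assoc] using this

lemma socleSeq_left (α : Ordinal.{u}) : ∀ r : R, ∀ x ∈ socleSeq R α, r * x ∈ socleSeq R α := by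
  induction α using Ordinal.limitRecOn with
  | zero =>
    intro r x hx
    rw [socleSeq_zero, mem_bot] at hx ⊢
    rw [hx, mul_zero]
  | add_one α ih =>
    intro r x hx
    rw [socleSeq_succ] at hx ⊢
    induction hx using span_induction with
    | mem x hx => exact subset_span (NS.mul_left ih hx r)
    | zero => simp
    | add x y _ _ hx hy => rw [mul_add]; exact add_mem hx hy
    | smul a x _ hx =>
      have := smul_mem _ a hx
      simpa [MulOpposite.smul_eq_mul_unop, mul_assoc] using this
  | limit o ho ih =>
    intro r x hx
    obtain ⟨β, hβ, hxβ⟩ := mem_socleSeq_limit ho hx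
    exact socleSeq_mono hβ.le (ih β hβ r x hxβ)

/-- The socle sequence, seen as left ideals. -/
noncomputable def leftSeq (R : Type u) [Ring R] (α : Ordinal.{u}) : Submodule R R where
  carrier := socleSeq R α
  add_mem' := fun ha hb => add_mem ha hb
  zero_mem' := zero_mem _
  smul_mem' := fun r x hx => socleSeq_left α r x hx

lemma mem_leftSeq {α : Ordinal.{u}} {x : R} : x ∈ leftSeq R α ↔ x ∈ socleSeq R α := Iff.rfl

lemma NS.to_left (h : IsVNRegular R) {α : Ordinal.{u}} {x : R} (hx : NS (socleSeq R α) x) :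
    NS (leftSeq R α) x := by
  rw [NS_right_iff] at hx
  intro r hr
  rw [smul_eq_mul, mem_leftSeq] at hr
  obtain ⟨z, hz⟩ := h (r * x)
  refine ⟨x * z, ?_⟩
  rw [mem_leftSeq, smul_eq_mul, smul_eq_mul]
  by_contra hw
  have e : x - x * z * (r * x) = x * (1 - z * (r * x)) := by noncomm_ring
  rw [e] at hw
  obtain ⟨u, hu⟩ := hx _ hw
  have := socleSeq_left α r _ hu
  apply hr
  have e2 : r * (x - x * (1 - z * (r * x)) * u) =
      r * x - (r * x - r * x * z * (r * x)) * u := by noncomm_ring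
  rw [e2, hz] at this
  simpa using this

lemma leftSeq_succ_le (h : IsVNRegular R) (α : Ordinal.{u}) :
    leftSeq R (α + 1) ≤ span R {x | NS (leftSeq R α) x} := by
  intro x hx
  rw [mem_leftSeq, socleSeq_succ] at hx
  induction hx using Submodule.closure_induction with
  | zero => exact zero_mem _
  | add x y _ _ hx hy => exact add_mem hx hy
  | smul_mem a x hx =>
    apply subset_span
    rw [MulOpposite.smul_eq_mul_unop]
    exact (NS.mul_right hx _).to_left h

/-- Projection onto a finitely generated left ideal. -/
lemma fg_left_idem (h : IsVNRegular R) (F : Finset R) :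
    ∃ e ∈ span R (F : Set R), ∀ f ∈ F, f * (1 - e) = 0 := by
  have hz := zreg_left h
  choose φ hφ using hz
  obtain ⟨n, c, hc⟩ : ∃ (n : ℕ) (c : ℕ → R), c '' Set.Iio n = (F : Set R) := by
    let l := F.toList
    refine ⟨l.length, fun i => l.getD i 0, ?_⟩
    ext y
    simp only [Set.mem_image, Set.mem_Iio, Finset.mem_coe]
    rw [← Finset.mem_toList, List.mem_iff_getElem]
    constructor
    · rintro ⟨i, hi, rfl⟩
      exact ⟨i, hi, (List.getD_eq_getElem l 0 hi).symm⟩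
    · rintro ⟨i, hi, rfl⟩
      exact ⟨i, hi, List.getD_eq_getElem l 0 hi⟩
  obtain ⟨h1, h2⟩ := projSeq_spec φ hφ c n
  rw [hc] at h1 h2
  refine ⟨projSeq φ c n 1, h1 1, fun f hf => ?_⟩
  have := h2 f (subset_span hf)
  rw [mul_sub, mul_one, ← smul_eq_mul f, ← map_smul, smul_eq_mul, mul_one, this, sub_self]

/-- The right annihilator of `F` modulo `P`. -/
def rann (P : Submodule Rᵐᵒᵖ R) (F : Set R) : Submodule Rᵐᵒᵖ R where
  carrier := {r | ∀ f ∈ F, f * r ∈ P}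
  add_mem' := fun ha hb f hf => by rw [mul_add]; exact add_mem (ha f hf) (hb f hf)
  zero_mem' := fun f _ => by simp
  smul_mem' := fun c x hx f hf => by
    have := smul_mem P c (hx f hf)
    simpa [MulOpposite.smul_eq_mul_unop, mul_assoc] using this

lemma artin_fg (h : IsVNRegular R) (P : Submodule Rᵐᵒᵖ R) (hP : ∀ r : R, ∀ x ∈ P, r * x ∈ P)
    [IsArtinian Rᵐᵒᵖ (R ⧸ P)] (L : Set R) :
    ∃ F : Finset R, (F : Set R) ⊆ L ∧ ∀ a ∈ L, ∃ g ∈ span R (F : Set R), a - g ∈ P := by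
  classical
  obtain ⟨X, ⟨F, hF, rfl⟩, hmin⟩ := IsArtinian.set_has_minimal
    {X : Submodule Rᵐᵒᵖ (R ⧸ P) | ∃ F : Finset R, (F : Set R) ⊆ L ∧ X = map P.mkQ (rann P F)}
    ⟨_, ∅, by simp, rfl⟩
  refine ⟨F, hF, fun a ha => ?_⟩
  obtain ⟨e, he, hfe⟩ := fg_left_idem h F
  refine ⟨a * e, by simpa using smul_mem _ a he, ?_⟩
  have hPle : ∀ G : Set R, P ≤ rann P G := fun G x hx f _ => hP f x hx
  have hle : rann P (insert a F : Finset R) ≤ rann P F := fun x hx f hf => hx f (by simp [hf])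
  have hnlt := hmin _ ⟨insert a F, by
    intro y hy
    rcases Finset.mem_insert.mp hy with rfl | hy
    · exact ha
    · exact hF hy, rfl⟩
  have hge : map P.mkQ (rann P F) ≤ map P.mkQ (rann P (insert a F : Finset R)) := by
    by_contra hc
    exact hnlt (lt_of_le_not_ge (map_mono hle) hc)
  have hmem : (1 - e) ∈ rann P F := fun f hf => by rw [hfe f hf]; exact zero_mem _
  have h2 : (1 - e) ∈ comap P.mkQ (map P.mkQ (rann P (insert a F : Finset R))) :=
    hge (mem_map_of_mem hmem)
  rw [comap_map_mkQ, sup_eq_right.mpr (hPle _)] at h2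
  have h3 := h2 a (by simp)
  rwa [mul_sub, mul_one] at h3

lemma left_fg_of_NS (h : IsVNRegular R) (hpfa : HasPFA R) (α : Ordinal.{u}) (d : R)
    (hd : NS (socleSeq R α) d) : ∃ F : Finset R,
      (F : Set R) ⊆ span R (Set.range fun t => d * t) ∧
      ∀ t, d * t ∈ span R (F : Set R) ⊔ leftSeq R α := by
  by_cases hdS : d ∈ socleSeq R α
  · exact ⟨∅, by simp, fun t => mem_sup_right (mul_mem_right' _ hdS t)⟩
  have hs := hd.isSimple hdS
  have hart := hpfa _ hs
  set P := rightAnnihilator R (span Rᵐᵒᵖ {(socleSeq R α).mkQ d}) with hPdef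
  have hPmem : ∀ r, r ∈ P ↔ ∀ t, d * t * r ∈ socleSeq R α := by
    intro r
    have key : ∀ t, MulOpposite.op r • (MulOpposite.op t • (socleSeq R α).mkQ d) = 0 ↔
        d * t * r ∈ socleSeq R α := by
      intro t
      rw [← map_smul, ← map_smul, ← LinearMap.mem_ker, ker_mkQ]
      simp
    constructor
    · intro hr t
      have := hr ⟨MulOpposite.op t • (socleSeq R α).mkQ d,
        smul_mem _ _ (mem_span_singleton_self _)⟩
      exact (key t).mp (congrArg Subtype.val this)
    · intro hr m
      obtain ⟨a, ha⟩ := mem_span_singleton.mp m.2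
      apply Subtype.ext
      have := (key a.unop).mpr (hr a.unop)
      rw [MulOpposite.op_unop, ha] at this
      exact this
  have hPl : ∀ r : R, ∀ x ∈ P, r * x ∈ P := by
    intro r x hx
    rw [hPmem] at hx ⊢
    intro t
    have := hx (t * r)
    simpa [mul_assoc] using this
  obtain ⟨F, hF, hFa⟩ := artin_fg h P hPl (span R (Set.range fun t => d * t) : Set R)
  refine ⟨F, hF, fun t => ?_⟩
  have hdt : d * t ∈ span R (Set.range fun t => d * t) := subset_span ⟨t, rfl⟩
  obtain ⟨g, hg, hgP⟩ := hFa (d * t) hdt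
  have hLP : ∀ y ∈ span R (Set.range fun t => d * t), ∀ r ∈ P, y * r ∈ socleSeq R α := by
    intro y hy r hr
    induction hy using span_induction with
    | mem x hx =>
      obtain ⟨t, rfl⟩ := hx
      exact (hPmem r).mp hr t
    | zero => simp
    | add x y _ _ hx hy => rw [add_mul]; exact add_mem hx hy
    | smul a x _ hx => rw [smul_eq_mul, mul_assoc]; exact socleSeq_left α _ _ hx
  have hy : d * t - g ∈ span R (Set.range fun t => d * t) :=
    sub_mem hdt (span_le.mpr hF hg)
  obtain ⟨z, hz⟩ := h (d * t - g)
  have hmem := hLP _ hy _ (hPl z _ hgP)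
  rw [← mul_assoc, hz] at hmem
  exact mem_sup.mpr ⟨g, hg, d * t - g, hmem, by abel⟩

end RingPart

/-- Lemma 9, (2) ⟹ (1), of the paper: a semiartinian von Neumann
regular ring with primitive factors artinian whose Loewy length `σ + 1` has `σ`
countable and whose proper layers are countably generated is left and right hereditary. -/
theorem hereditary_of_countable_layers (R : Type u) [Ring R]
    (hsa : IsRightSemiartinian R) (hvnr : IsVNRegular R) (hpfa : HasPFA R)
    (σ : Ordinal.{u}) (hσ : IsLeast {o : Ordinal.{u} | socleSeq R o = ⊤} (σ + 1))
    (hσc : σ.card ≤ Cardinal.aleph0)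
    (hlayers : ∀ α : Ordinal.{u}, 0 < α → α < σ →
      ∃ S : Set (Layer R α), S.Countable ∧ Submodule.span Rᵐᵒᵖ S = ⊤) :
    (∀ I : Submodule Rᵐᵒᵖ R, Module.Projective Rᵐᵒᵖ ↥I) ∧
    (∀ I : Ideal R, Module.Projective R ↥I) := by
  have hcR : ∀ α, 0 < α → α ≤ σ → ∃ D : Set R, D.Countable ∧ D ⊆ socleSeq R (α + 1) ∧
      socleSeq R (α + 1) ≤ span Rᵐᵒᵖ D ⊔ socleSeq R α := by
    intro α h0 hα
    rcases hα.eq_or_lt with rfl | hlt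
    · have htop : socleSeq R (α + 1) = ⊤ := hσ.1
      refine ⟨{1}, Set.countable_singleton 1, by simp [htop], ?_⟩
      refine le_sup_of_le_left fun x _ => ?_
      exact mem_span_singleton.mpr ⟨MulOpposite.op x, by simp⟩
    · obtain ⟨S, hS, hspan⟩ := hlayers α h0 hlt
      have hsurj := (layerKer R α).mkQ_surjective
      choose f hf using hsurj
      refine ⟨(fun s => (f s : R)) '' S, hS.image _, ?_, ?_⟩
      · rintro _ ⟨s, -, rfl⟩
        exact (f s).2
      · intro x hx
        have hle : span Rᵐᵒᵖ S ≤ map (layerKer R α).mkQ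
            (comap (socleSeq R (α + 1)).subtype (span Rᵐᵒᵖ ((fun s => (f s : R)) '' S))) := by
          rw [span_le]
          intro s hs
          exact ⟨f s, subset_span ⟨s, hs, rfl⟩, hf s⟩
        have hx' : (layerKer R α).mkQ ⟨x, hx⟩ ∈ span Rᵐᵒᵖ S := hspan ▸ mem_top
        obtain ⟨y, hy, hyx⟩ := hle hx'
        have hk : (⟨x, hx⟩ - y : ↥(socleSeq R (α + 1))) ∈ layerKer R α := by
          rw [← ker_mkQ (layerKer R α), LinearMap.mem_ker, map_sub, hyx, sub_self]
        exact mem_sup.mpr ⟨y, hy, x - y, hk, by abel⟩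
  have hcL : ∀ α, 0 < α → α ≤ σ → ∃ D : Set R, D.Countable ∧ D ⊆ leftSeq R (α + 1) ∧
      leftSeq R (α + 1) ≤ span R D ⊔ leftSeq R α := by
    intro α h0 hα
    obtain ⟨D, hDc, hD1, hD2⟩ := hcR α h0 hα
    have hfin : ∀ d : D, ∃ T : Finset R, (T : Set R) ⊆ {x | NS (socleSeq R α) x} ∧
        (d : R) ∈ span Rᵐᵒᵖ (T : Set R) := by
      intro d
      have hd := hD1 d.2
      rw [SetLike.mem_coe, socleSeq_succ] at hd
      exact mem_span_finite_of_mem_span hd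
    choose T hT hdT using hfin
    have hDcc : Countable D := hDc.to_subtype
    let D' : Set R := ⋃ d : D, (T d : Set R)
    have hD'c : D'.Countable := Set.countable_iUnion fun d => (T d).countable_toSet
    have hD'NS : ∀ d ∈ D', NS (socleSeq R α) d := by
      intro d hd
      obtain ⟨i, hi⟩ := Set.mem_iUnion.mp hd
      exact hT i hi
    have hDD' : span Rᵐᵒᵖ D ≤ span Rᵐᵒᵖ D' := by
      rw [span_le]
      intro d hd
      exact span_mono (Set.subset_iUnion (fun d : D => (T d : Set R)) ⟨d, hd⟩) (hdT ⟨d, hd⟩)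
    have hF : ∀ d : D', ∃ F : Finset R,
        (F : Set R) ⊆ span R (Set.range fun t => (d : R) * t) ∧
        ∀ t, (d : R) * t ∈ span R (F : Set R) ⊔ leftSeq R α :=
      fun d => left_fg_of_NS hvnr hpfa α d (hD'NS d d.2)
    choose F hF1 hF2 using hF
    have hD'cc : Countable D' := hD'c.to_subtype
    refine ⟨⋃ d : D', (F d : Set R), Set.countable_iUnion fun d => (F d).countable_toSet, ?_, ?_⟩
    · refine Set.iUnion_subset fun d => (hF1 d).trans ?_
      rw [SetLike.coe_subset_coe, span_le]
      rintro _ ⟨t, rfl⟩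
      rw [SetLike.mem_coe, mem_leftSeq, socleSeq_succ]
      exact subset_span ((hD'NS d d.2).mul_right t)
    · intro x hx
      obtain ⟨y, hy, n, hn, rfl⟩ := mem_sup.mp (hD2 hx)
      refine add_mem ?_ (mem_sup_right hn)
      have hy' := hDD' hy
      clear hy hx
      induction hy' using Submodule.closure_induction with
      | zero => exact zero_mem _
      | add x y _ _ hx hy => exact add_mem hx hy
      | smul_mem a x hx =>
        rw [MulOpposite.smul_eq_mul_unop]
        have hle : span R (F ⟨x, hx⟩ : Set R) ≤ span R (⋃ d : D', (F d : Set R)) :=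
          span_mono (Set.subset_iUnion (fun d : D' => (F d : Set R)) ⟨x, hx⟩)
        have hle2 : span R (F ⟨x, hx⟩ : Set R) ⊔ leftSeq R α ≤
            span R (⋃ d : D', (F d : Set R)) ⊔ leftSeq R α := sup_le_sup_right hle _
        exact hle2 (hF2 ⟨x, hx⟩ _)
  constructor
  · exact hereditary_generic (zreg_right hvnr) σ (socleSeq R) socleSeq_zero
      (fun o ho x hx => mem_socleSeq_limit ho hx) hσ.1 (fun α => (socleSeq_succ α).le) hσc hcR
  · refine hereditary_generic (zreg_left hvnr) σ (leftSeq R) ?_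
      (fun o ho x hx => mem_socleSeq_limit ho hx) ?_ (leftSeq_succ_le hvnr) hσc hcL
    · ext x
      rw [mem_leftSeq, socleSeq_zero, mem_bot, mem_bot]
    · ext x
      have htop : socleSeq R (σ + 1) = ⊤ := hσ.1
      rw [mem_leftSeq, htop]
      simp
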